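/- Let S, S' be sets of variable assignments, x a variable, I a closed interval, B a box assignment, and B' a box assignment such that B' ⊆ B[x↦I], B' ⊇ B[x↦I] ∩ S, and S' ∩ B' = S ∩ B'. Then {d : d[x↦r] ∈ S for some r ∈ I} ∩ B' = {d : d[x↦r] ∈ S' for some r ∈ B'(x)} ∩ B', where B'(x) denotes the interval that B' assigns to the variable x. (This is the existential-quantifier soundness step in the proof that N_A is an outer narrowing operator.) -/

import Mathlib

open Set

/-- A closed real interval (possibly empty or unbounded): a closed, order-connected set. -/
def IsClosedInterval (s : Set ℝ) : Prop := IsClosed s ∧ s.OrdConnected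

/-- The type of closed real intervals. -/
abbrev CInterval : Type := {s : Set ℝ // IsClosedInterval s}

/-- A box assignment: a function from the variables to closed real intervals. -/
structure Box (V : Type) where
  comp : V → CInterval

/-- The set of variable assignments represented by a box assignment. -/
def Box.pts {V : Type} (B : Box V) : Set (V → ℝ) := {d | ∀ v, d v ∈ (B.comp v).1}

/-- `B.upd x I` is the box assignment equal to `B` except that it assigns `I` to `x`. -/
def Box.upd {V : Type} [DecidableEq V] (B : Box V) (x : V) (I : CInterval) : Box V :=
  ⟨Function.update B.comp x I⟩

/-- The smallest closed interval containing a set of reals. -/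
def cIntHull (s : Set ℝ) : Set ℝ := ⋂₀ {t | IsClosedInterval t ∧ s ⊆ t}

theorem isClosedInterval_cIntHull (s : Set ℝ) : IsClosedInterval (cIntHull s) := by
  constructor
  · exact isClosed_sInter fun t ht => ht.1.1
  · constructor
    intro x hx y hy z hz
    rw [cIntHull, Set.mem_sInter] at *
    intro t ht
    exact ht.1.2.out (hx t ht) (hy t ht) hz

/-- The smallest box assignment containing a given set of variable assignments. -/
noncomputable def canonBox {V : Type} (S : Set (V → ℝ)) : Box V :=
  ⟨fun v => ⟨cIntHull ((fun d => d v) '' S), isClosedInterval_cIntHull _⟩⟩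

/-- The box union `B₁ ⊎ B₂`: the smallest box assignment containing both `B₁` and `B₂`. -/
noncomputable def boxUnion {V : Type} (B₁ B₂ : Box V) : Box V := canonBox (B₁.pts ∪ B₂.pts)

/-- Quantified constraints: atoms `f ≤ g`, `f < g`, `f ≥ g`, `f > g`, conjunction,
disjunction, and bounded quantifiers with closed-interval bounds (no negation). -/
inductive QC (V : Type) : Type where
  | le (f g : (V → ℝ) → ℝ)
  | lt (f g : (V → ℝ) → ℝ)
  | ge (f g : (V → ℝ) → ℝ)
  | gt (f g : (V → ℝ) → ℝ)
  | conj (φ₁ φ₂ : QC V)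
  | disj (φ₁ φ₂ : QC V)
  | exQ (x : V) (I : CInterval) (φ : QC V)
  | allQ (x : V) (I : CInterval) (φ : QC V)

/-- The semantics of a quantified constraint: the set of variable assignments making it true. -/
def QC.sem {V : Type} [DecidableEq V] : QC V → Set (V → ℝ)
  | .le f g => {d | f d ≤ g d}
  | .lt f g => {d | f d < g d}
  | .ge f g => {d | g d ≤ f d}
  | .gt f g => {d | g d < f d}
  | .conj φ₁ φ₂ => φ₁.sem ∩ φ₂.sem
  | .disj φ₁ φ₂ => φ₁.sem ∪ φ₂.sem
  | .exQ x I φ => {d | ∃ r ∈ I.1, Function.update d x r ∈ φ.sem}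
  | .allQ x I φ => {d | ∀ r ∈ I.1, Function.update d x r ∈ φ.sem}

/-- The opposite of a quantified constraint: negation pushed down to the atoms. -/
def QC.opp {V : Type} : QC V → QC V
  | .le f g => .gt f g
  | .lt f g => .ge f g
  | .ge f g => .lt f g
  | .gt f g => .le f g
  | .conj φ₁ φ₂ => .disj φ₁.opp φ₂.opp
  | .disj φ₁ φ₂ => .conj φ₁.opp φ₂.opp
  | .exQ x I φ => .allQ x I φ.opp
  | .allQ x I φ => .exQ x I φ.opp

/-- Atomic constraints. -/
def QC.Atomic {V : Type} : QC V → Prop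
  | .le _ _ => True
  | .lt _ _ => True
  | .ge _ _ => True
  | .gt _ _ => True
  | _ => False

/-- A narrowing operator on bounded constraints: contractant, sound, monotone, idempotent. -/
def IsNarrowing {V : Type} [DecidableEq V] (N : QC V × Box V → QC V × Box V) : Prop :=
  (∀ (φ : QC V) (B : Box V), ((N (φ, B)).2).pts ⊆ B.pts) ∧
  (∀ (φ : QC V) (B : Box V),
    ((N (φ, B)).1).sem ∩ ((N (φ, B)).2).pts = φ.sem ∩ ((N (φ, B)).2).pts) ∧
  (∀ (φ : QC V) (B B' : Box V), B'.pts ⊆ B.pts → ((N (φ, B')).2).pts ⊆ ((N (φ, B)).2).pts) ∧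
  (∀ (φ : QC V) (B : Box V), N (N (φ, B)) = N (φ, B))

/-- An outer narrowing operator removes only points outside the solution set. -/
def IsOuterNarrowing {V : Type} [DecidableEq V] (N : QC V × Box V → QC V × Box V) : Prop :=
  IsNarrowing N ∧ ∀ (φ : QC V) (B : Box V), B.pts ∩ φ.sem ⊆ ((N (φ, B)).2).pts

/-- An inner narrowing operator removes only points inside the solution set. -/
def IsInnerNarrowing {V : Type} [DecidableEq V] (N : QC V × Box V → QC V × Box V) : Prop :=
  IsNarrowing N ∧ ∀ (φ : QC V) (B : Box V), B.pts \ φ.sem ⊆ ((N (φ, B)).2).pts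

/-- A narrowing operator on atomic bounded constraints. -/
def IsAtomicNarrowing {V : Type} [DecidableEq V] (A : QC V × Box V → QC V × Box V) : Prop :=
  (∀ (φ : QC V) (B : Box V), φ.Atomic → ((A (φ, B)).1).Atomic) ∧
  (∀ (φ : QC V) (B : Box V), φ.Atomic → ((A (φ, B)).2).pts ⊆ B.pts) ∧
  (∀ (φ : QC V) (B : Box V), φ.Atomic →
    ((A (φ, B)).1).sem ∩ ((A (φ, B)).2).pts = φ.sem ∩ ((A (φ, B)).2).pts) ∧
  (∀ (φ : QC V) (B B' : Box V), φ.Atomic → B'.pts ⊆ B.pts →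
    ((A (φ, B')).2).pts ⊆ ((A (φ, B)).2).pts) ∧
  (∀ (φ : QC V) (B : Box V), φ.Atomic → A (A (φ, B)) = A (φ, B))

/-- An outer narrowing operator on atomic bounded constraints. -/
def IsAtomicOuterNarrowing {V : Type} [DecidableEq V] (A : QC V × Box V → QC V × Box V) : Prop :=
  IsAtomicNarrowing A ∧
  ∀ (φ : QC V) (B : Box V), φ.Atomic → B.pts ∩ φ.sem ⊆ ((A (φ, B)).2).pts

/-- Finitely contracting: no infinite sequence of bounded constraints where each
constraint part is the output constraint and each bound is a strict subset of the
output bound of the previous application. -/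
def FinitelyContracting {V : Type} (A : QC V × Box V → QC V × Box V) : Prop :=
  ¬ ∃ s : ℕ → QC V × Box V, ∀ k : ℕ,
      (s (k + 1)).1 = (A (s k)).1 ∧ (s (k + 1)).2.pts ⊂ ((A (s k)).2).pts

mutual
  /-- The pruning algorithm `N_A` lifted from an atomic narrowing operator `A`,
  as a relation between inputs and outputs. -/
  inductive NRel {V : Type} [DecidableEq V] (A : QC V × Box V → QC V × Box V) :
      QC V × Box V → QC V × Box V → Prop where
    | atom {φ : QC V} {B : Box V} (h : φ.Atomic) : NRel A (φ, B) (A (φ, B))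
    | conj {φ₁ φ₂ ψ₁ ψ₂ : QC V} {B B' : Box V} {n : ℕ} {c : ℕ → QC V × QC V × Box V}
        (h0 : c 0 = (φ₁, φ₂, B)) (hn : c n = (ψ₁, ψ₂, B'))
        (hstep : ∀ i : ℕ, i < n → ConjStep A (c i) (c (i + 1)))
        (hfix₁ : NRel A (ψ₁, B') (ψ₁, B'))
        (hfix₂ : NRel A (ψ₂, B') (ψ₂, B')) :
        NRel A (QC.conj φ₁ φ₂, B) (QC.conj ψ₁ ψ₂, B')
    | disj {φ₁ φ₂ ψ₁ ψ₂ : QC V} {B B₁ B₂ : Box V}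
        (h₁ : NRel A (φ₁, B) (ψ₁, B₁)) (h₂ : NRel A (φ₂, B) (ψ₂, B₂)) :
        NRel A (QC.disj φ₁ φ₂, B) (QC.disj ψ₁ ψ₂, boxUnion B₁ B₂)
    | exQ {x : V} {I : CInterval} {φ ψ : QC V} {B B' : Box V}
        (h : NRel A (φ, B.upd x I) (ψ, B')) :
        NRel A (QC.exQ x I φ, B) (QC.exQ x (B'.comp x) ψ, B')
    | allQ {x : V} {I : CInterval} {φ ψ : QC V} {B B' : Box V}
        (h : NRel A (φ, B.upd x I) (ψ, B')) :
        NRel A (QC.allQ x I φ, B)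
          (QC.allQ x I ψ, canonBox {d : V → ℝ | ∀ r ∈ I.1, Function.update d x r ∈ B'.pts})

  /-- One step of the fixpoint iteration in the conjunction case of `N_A`:
  prune one of the two conjuncts. -/
  inductive ConjStep {V : Type} [DecidableEq V] (A : QC V × Box V → QC V × Box V) :
      QC V × QC V × Box V → QC V × QC V × Box V → Prop where
    | left {φ₁ φ₂ ψ₁ : QC V} {B B' : Box V} (h : NRel A (φ₁, B) (ψ₁, B')) :
        ConjStep A (φ₁, φ₂, B) (ψ₁, φ₂, B')
    | right {φ₁ φ₂ ψ₂ : QC V} {B B' : Box V} (h : NRel A (φ₂, B) (ψ₂, B')) :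
        ConjStep A (φ₁, φ₂, B) (φ₁, ψ₂, B')
end

/-- The consistency property `C` on atomic constraints lifted to quantified constraints. -/
inductive Lift {V : Type} [DecidableEq V] (C : QC V → Box V → Prop) : QC V → Box V → Prop where
  | atom {φ : QC V} {B : Box V} (h : φ.Atomic) (hC : C φ B) : Lift C φ B
  | conj {φ₁ φ₂ : QC V} {B : Box V} (h₁ : Lift C φ₁ B) (h₂ : Lift C φ₂ B) :
      Lift C (QC.conj φ₁ φ₂) B
  | disj {φ₁ φ₂ : QC V} {B B₁ B₂ : Box V} (hB : B.pts = (boxUnion B₁ B₂).pts)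
      (h₁ : Lift C φ₁ B₁) (h₂ : Lift C φ₂ B₂) : Lift C (QC.disj φ₁ φ₂) B
  | exQ {x : V} {I : CInterval} {φ : QC V} {B : Box V} (h : Lift C φ (B.upd x I)) :
      Lift C (QC.exQ x I φ) B
  | allQ {x : V} {I : CInterval} {φ : QC V} {B : Box V} (h : Lift C φ (B.upd x I)) :
      Lift C (QC.allQ x I φ) B

/-- The degree of truth of a quantified constraint, with values in the extended reals. -/
noncomputable def QC.deg {V : Type} [DecidableEq V] : QC V → (V → ℝ) → EReal
  | .le f g => fun d => ((g d - f d : ℝ) : EReal)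
  | .lt f g => fun d => ((g d - f d : ℝ) : EReal)
  | .ge f g => fun d => ((f d - g d : ℝ) : EReal)
  | .gt f g => fun d => ((f d - g d : ℝ) : EReal)
  | .conj φ₁ φ₂ => fun d => min (φ₁.deg d) (φ₂.deg d)
  | .disj φ₁ φ₂ => fun d => max (φ₁.deg d) (φ₂.deg d)
  | .exQ x I φ => fun d => ⨆ r ∈ I.1, φ.deg (Function.update d x r)
  | .allQ x I φ => fun d => ⨅ r ∈ I.1, φ.deg (Function.update d x r)

/-- A converging atomic (outer) narrowing operator. -/
def Converging {V : Type} [DecidableEq V] (A : QC V × Box V → QC V × Box V) : Prop :=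
  ∀ φ : QC V, φ.Atomic → ∀ Bs : ℕ → Box V,
    (∀ i, (Bs (i + 1)).pts ⊆ (Bs i).pts) →
    ∀ d : V → ℝ, (⋂ i, (Bs i).pts) = {d} → φ.deg d < 0 →
    ∃ k, ∀ l, k ≤ l → ((A (φ, Bs l)).2).pts = ∅

/-- One branching step: split a quantifier bound of some subconstraint. -/
inductive Branch {V : Type} : QC V → QC V → Prop where
  | allSplit {x : V} {I I₁ I₂ : CInterval} {φ : QC V} (h : I.1 = I₁.1 ∪ I₂.1) :
      Branch (QC.allQ x I φ) (QC.conj (QC.allQ x I₁ φ) (QC.allQ x I₂ φ))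
  | exSplit {x : V} {I I₁ I₂ : CInterval} {φ : QC V} (h : I.1 = I₁.1 ∪ I₂.1) :
      Branch (QC.exQ x I φ) (QC.disj (QC.exQ x I₁ φ) (QC.exQ x I₂ φ))
  | conjL {φ₁ φ₁' φ₂ : QC V} (h : Branch φ₁ φ₁') : Branch (QC.conj φ₁ φ₂) (QC.conj φ₁' φ₂)
  | conjR {φ₁ φ₂ φ₂' : QC V} (h : Branch φ₂ φ₂') : Branch (QC.conj φ₁ φ₂) (QC.conj φ₁ φ₂')
  | disjL {φ₁ φ₁' φ₂ : QC V} (h : Branch φ₁ φ₁') : Branch (QC.disj φ₁ φ₂) (QC.disj φ₁' φ₂)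
  | disjR {φ₁ φ₂ φ₂' : QC V} (h : Branch φ₂ φ₂') : Branch (QC.disj φ₁ φ₂) (QC.disj φ₁ φ₂')
  | exCong {x : V} {I : CInterval} {φ φ' : QC V} (h : Branch φ φ') :
      Branch (QC.exQ x I φ) (QC.exQ x I φ')
  | allCong {x : V} {I : CInterval} {φ φ' : QC V} (h : Branch φ φ') :
      Branch (QC.allQ x I φ) (QC.allQ x I φ')

/-- All quantification intervals of the constraint have diameter (length) at most `ε`. -/
def QC.smallQ {V : Type} (ε : ENNReal) : QC V → Prop
  | .conj φ₁ φ₂ => φ₁.smallQ ε ∧ φ₂.smallQ ε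
  | .disj φ₁ φ₂ => φ₁.smallQ ε ∧ φ₂.smallQ ε
  | .exQ _ I φ => EMetric.diam I.1 ≤ ε ∧ φ.smallQ ε
  | .allQ _ I φ => EMetric.diam I.1 ≤ ε ∧ φ.smallQ ε
  | _ => True

/-- The box assignment assigning all of ℝ to every variable. -/
def topBox (V : Type) : Box V :=
  ⟨fun _ => ⟨Set.univ, ⟨isClosed_univ, Set.ordConnected_univ⟩⟩⟩

theorem exists_sound_step {V : Type} [DecidableEq V] (S S' : Set (V → ℝ)) (x : V)
    (I : CInterval) (B B' : Box V)
    (h1 : B'.pts ⊆ (B.upd x I).pts)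
    (h2 : (B.upd x I).pts ∩ S ⊆ B'.pts)
    (h3 : S' ∩ B'.pts = S ∩ B'.pts) :
    {d : V → ℝ | ∃ r ∈ I.1, Function.update d x r ∈ S} ∩ B'.pts =
      {d : V → ℝ | ∃ r ∈ (B'.comp x).1, Function.update d x r ∈ S'} ∩ B'.pts := by
  -- Changing the value of `x` within the `x`-component of a box keeps a point in that box.
  have upd_mem (C : Box V) {d : V → ℝ} (hd : d ∈ C.pts) {r : ℝ} (hr : r ∈ (C.comp x).1) :
      Function.update d x r ∈ C.pts := by
    intro v
    by_cases hv : v = x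
    · subst hv
      simpa using hr
    · simpa [Function.update_of_ne hv] using hd v
  have hx : (B.upd x I).comp x = I := Function.update_self ..
  ext d
  constructor
  · rintro ⟨⟨r, hr, hS⟩, hd⟩
    -- `d[x↦r]` is a solution in `B[x↦I]`, so narrowing to `B'` does not lose it.
    have hB' : Function.update d x r ∈ B'.pts :=
      h2 ⟨upd_mem (B.upd x I) (h1 hd) (hx.symm ▸ hr), hS⟩
    refine ⟨⟨r, ?_, (h3.ge ⟨hS, hB'⟩).1⟩, hd⟩
    simpa using hB' x
  · rintro ⟨⟨r, hr, hS'⟩, hd⟩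
    have hB' : Function.update d x r ∈ B'.pts := upd_mem B' hd hr
    refine ⟨⟨r, ?_, (h3.le ⟨hS', hB'⟩).1⟩, hd⟩
    simpa [hx] using h1 hB' x
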